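/- The infimum of the penalized elastic energy F(γ) = ∫_γ (k² + 1) ds over all drops, i.e. over all regular curves γ:[0,1]→ℝ² of class H² with γ(0)=γ(1), is attained: there exists a drop γ₀ with F(γ₀) ≤ F(γ) for every drop γ. -/

import Mathlib

/-- A regular planar curve of class `H²`, recorded through its components `x, y`,
their first derivatives `xd, yd` and second derivatives `xdd, ydd` on `[0,1]`,
together with the regularity (non-vanishing speed) and the integrability of the
(squared and absolute) curvature with respect to arclength. -/
structure RegularCurve where
  x : ℝ → ℝ
  y : ℝ → ℝ
  xd : ℝ → ℝ
  yd : ℝ → ℝ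
  xdd : ℝ → ℝ
  ydd : ℝ → ℝ
  hx : ∀ t ∈ Set.Icc (0:ℝ) 1, HasDerivWithinAt x (xd t) (Set.Icc 0 1) t
  hy : ∀ t ∈ Set.Icc (0:ℝ) 1, HasDerivWithinAt y (yd t) (Set.Icc 0 1) t
  hxd : ∀ t ∈ Set.Icc (0:ℝ) 1, HasDerivWithinAt xd (xdd t) (Set.Icc 0 1) t
  hyd : ∀ t ∈ Set.Icc (0:ℝ) 1, HasDerivWithinAt yd (ydd t) (Set.Icc 0 1) t
  regular : ∀ t ∈ Set.Icc (0:ℝ) 1, xd t ^ 2 + yd t ^ 2 ≠ 0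
  intE : IntervalIntegrable
    (fun t => (xd t * ydd t - xdd t * yd t) ^ 2 /
      ((xd t ^ 2 + yd t ^ 2) ^ 2 * Real.sqrt (xd t ^ 2 + yd t ^ 2)))
    MeasureTheory.volume 0 1
  intK : IntervalIntegrable
    (fun t => |xd t * ydd t - xdd t * yd t| / (xd t ^ 2 + yd t ^ 2))
    MeasureTheory.volume 0 1

namespace RegularCurve

/-- The elastic energy `∫ k² ds`, where `k = (x'y'' - x''y')/|γ'|³` is the scalar
curvature and `ds = |γ'| dx`. -/
noncomputable def elasticEnergy (γ : RegularCurve) : ℝ :=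
  ∫ t in (0:ℝ)..1, (γ.xd t * γ.ydd t - γ.xdd t * γ.yd t) ^ 2 /
    ((γ.xd t ^ 2 + γ.yd t ^ 2) ^ 2 * Real.sqrt (γ.xd t ^ 2 + γ.yd t ^ 2))

/-- The length `∫ 1 ds`. -/
noncomputable def length (γ : RegularCurve) : ℝ :=
  ∫ t in (0:ℝ)..1, Real.sqrt (γ.xd t ^ 2 + γ.yd t ^ 2)

/-- The total absolute curvature `∫ |k| ds`. -/
noncomputable def totalAbsCurvature (γ : RegularCurve) : ℝ :=
  ∫ t in (0:ℝ)..1, |γ.xd t * γ.ydd t - γ.xdd t * γ.yd t| / (γ.xd t ^ 2 + γ.yd t ^ 2)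

/-- A curve is closed if `γ(0) = γ(1)` and the unit tangents agree, `τ(0) = τ(1)`. -/
def IsClosedCurve (γ : RegularCurve) : Prop :=
  γ.x 0 = γ.x 1 ∧ γ.y 0 = γ.y 1 ∧
  γ.xd 0 / Real.sqrt (γ.xd 0 ^ 2 + γ.yd 0 ^ 2)
    = γ.xd 1 / Real.sqrt (γ.xd 1 ^ 2 + γ.yd 1 ^ 2) ∧
  γ.yd 0 / Real.sqrt (γ.xd 0 ^ 2 + γ.yd 0 ^ 2)
    = γ.yd 1 / Real.sqrt (γ.xd 1 ^ 2 + γ.yd 1 ^ 2)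

end RegularCurve

/-!
A curve of length `L` and elastic energy `E`, rescaled to length `1`, has curvature `k ∈ L²(0, 1)`
as a function of arclength with `E * L = ‖k‖ ^ 2`. Hence `E + L ≥ 2 * ‖k‖` by AM-GM, with equality
when `L = ‖k‖`, and it suffices to minimize `‖k‖` subject to the closing condition
`∫ exp (i θ) = 0`, where `θ t = ∫ s in 0..t, k s`.

Weak convergence of curvatures gives pointwise convergence of the angles `θ`, so the closing
condition is weakly closed and a minimizer `g` exists. Since a `RegularCurve` needs a second
derivative at every point, `g` must also be shown to be continuous. Its Lagrange multiplier equation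
is `c * g t = ∫ s in t..1, ℓ (i exp (i θ s))` for a linear form `ℓ` on the plane and a constant `c`,
not both zero. Here `c ≠ 0`: otherwise `ℓ` kills every normal `i exp (i θ s)`, and the normals of a
closed curve span the plane.
-/

open MeasureTheory Set Filter Topology
open scoped Complex

noncomputable section

section WeakCompactness

variable {E : Type*} [NormedAddCommGroup E] [InnerProductSpace ℝ E] [CompleteSpace E]
  [TopologicalSpace.SeparableSpace E]

lemma exists_subseq_tendsto_inner {u : ℕ → E} {r : ℝ} (hu : ∀ n, ‖u n‖ ≤ r) :
    ∃ (g : E) (φ : ℕ → ℕ), StrictMono φ ∧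
      ∀ w, Tendsto (fun n => inner ℝ (u (φ n)) w) atTop (𝓝 (inner ℝ g w)) := by
  let v (n : ℕ) : WeakDual ℝ E := StrongDual.toWeakDual (InnerProductSpace.toDual ℝ E (u n))
  have hv (n : ℕ) : v n ∈ WeakDual.toStrongDual ⁻¹' Metric.closedBall (0 : StrongDual ℝ E) r := by
    rw [mem_preimage, mem_closedBall_zero_iff]
    exact ((InnerProductSpace.toDual ℝ E).norm_map (u n)).trans_le (hu n)
  obtain ⟨f, -, φ, hφ, hlim⟩ := WeakDual.isSeqCompact_closedBall ℝ E 0 r hv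
  refine ⟨(InnerProductSpace.toDual ℝ E).symm (WeakDual.toStrongDual f), φ, hφ, fun w => ?_⟩
  rw [InnerProductSpace.toDual_symm_apply]
  exact ((WeakDual.eval_continuous w).tendsto f).comp hlim

lemma exists_forall_norm_le_of_weakly_seq_closed {S : Set E} (hne : S.Nonempty)
    (hclosed : ∀ (u : ℕ → E) (g : E), (∀ n, u n ∈ S) →
      (∀ w, Tendsto (fun n => inner ℝ (u n) w) atTop (𝓝 (inner ℝ g w))) → g ∈ S) :
    ∃ g ∈ S, ∀ h ∈ S, ‖g‖ ≤ ‖h‖ := by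
  have hbdd : BddBelow (norm '' S) := ⟨0, forall_mem_image.2 fun h _ => norm_nonneg h⟩
  obtain ⟨r, hanti, hlim, hr⟩ := exists_seq_tendsto_sInf (hne.image norm) hbdd
  choose u huS hur using hr
  obtain ⟨g, φ, hφ, hweak⟩ := exists_subseq_tendsto_inner (r := r 0)
    fun n => (hur n).trans_le (hanti n.zero_le)
  refine ⟨g, hclosed _ g (fun n => huS (φ n)) hweak, fun h hh => ?_⟩
  have hnorm : ‖g‖ * ‖g‖ ≤ sInf (norm '' S) * ‖g‖ := by
    rw [← real_inner_self_eq_norm_mul_norm]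
    refine le_of_tendsto_of_tendsto' (hweak g) ((hlim.comp hφ.tendsto_atTop).mul_const _)
      fun n => (real_inner_le_norm _ _).trans_eq ?_
    rw [hur, Function.comp_apply]
  have hinf : ‖g‖ ≤ sInf (norm '' S) := by
    rcases (norm_nonneg g).eq_or_lt with hg | hg
    · exact hg ▸ Real.sInf_nonneg (forall_mem_image.2 fun h _ => norm_nonneg h)
    · exact le_of_mul_le_mul_right hnorm hg
  exact hinf.trans (csInf_le hbdd (mem_image_of_mem norm hh))

end WeakCompactness

section AbsoluteContinuity

lemma absolutelyContinuousOnInterval_of_dist_le {X Y : Type*} [PseudoMetricSpace X]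
    [PseudoMetricSpace Y] {f : ℝ → X} {g : ℝ → Y} {a b : ℝ}
    (hg : AbsolutelyContinuousOnInterval g a b)
    (hfg : ∀ x ∈ uIcc a b, ∀ y ∈ uIcc a b, dist (f x) (f y) ≤ dist (g x) (g y)) :
    AbsolutelyContinuousOnInterval f a b := by
  rw [absolutelyContinuousOnInterval_iff] at hg ⊢
  intro ε hε
  obtain ⟨δ, hδ, h⟩ := hg ε hε
  refine ⟨δ, hδ, fun I hI hlen => (Finset.sum_le_sum fun i hi => ?_).trans_lt (h I hI hlen)⟩
  exact hfg _ (hI.1 i hi).1 _ (hI.1 i hi).2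

lemma absolutelyContinuousOnInterval_of_hasDerivAt {E : Type*} [NormedAddCommGroup E]
    [NormedSpace ℝ E] [CompleteSpace E] {f f' : ℝ → E} {a b : ℝ} (hab : a ≤ b)
    (hf : ContinuousOn f (Icc a b)) (hderiv : ∀ t ∈ Ioo a b, HasDerivAt f (f' t) t)
    (hint : IntervalIntegrable f' volume a b) : AbsolutelyContinuousOnInterval f a b := by
  have hsub {x y : ℝ} (hx : x ∈ uIcc a b) (hy : y ∈ uIcc a b) :
      IntervalIntegrable f' volume x y := hint.mono_set (uIcc_subset_uIcc hx hy)
  refine absolutelyContinuousOnInterval_of_dist_le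
    (hint.norm.absolutelyContinuousOnInterval_intervalIntegral left_mem_uIcc) fun x hx y hy => ?_
  wlog hxy : x ≤ y generalizing x y
  · simpa only [dist_comm] using this y hy x hx (le_of_not_ge hxy)
  have hxy_sub : Icc x y ⊆ Icc a b := uIcc_of_le hab ▸ uIcc_of_le hxy ▸ uIcc_subset_uIcc hx hy
  have hFTC : ∫ t in x..y, f' t = f y - f x :=
    intervalIntegral.integral_eq_sub_of_hasDerivAt_of_le hxy (hf.mono hxy_sub)
      (fun t ht => hderiv t (Ioo_subset_Ioo (hxy_sub (left_mem_Icc.2 hxy)).1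
        (hxy_sub (right_mem_Icc.2 hxy)).2 ht)) (hsub hx hy)
  calc dist (f x) (f y) = ‖∫ t in x..y, f' t‖ := by rw [hFTC, dist_comm, dist_eq_norm]
    _ ≤ |∫ t in x..y, ‖f' t‖| := intervalIntegral.norm_integral_le_abs_integral_norm
    _ = dist (∫ t in a..x, ‖f' t‖) (∫ t in a..y, ‖f' t‖) := by
        rw [dist_comm, Real.dist_eq, intervalIntegral.integral_interval_sub_left
          (hsub left_mem_uIcc hy).norm (hsub left_mem_uIcc hx).norm]

lemma dist_exp_ofReal_mul_I_le (θ φ : ℝ) : dist (cexp (θ * .I)) (cexp (φ * .I)) ≤ dist θ φ := by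
  simpa [circleMap] using (lipschitzWith_circleMap 0 1).dist_le_mul θ φ

lemma eq_mul_exp_integral_of_hasDerivAt {T : ℝ → ℂ} {κ : ℝ → ℝ} {a b : ℝ} (hab : a ≤ b)
    (hT : ContinuousOn T (Icc a b)) (hκ : IntervalIntegrable κ volume a b)
    (hderiv : ∀ t ∈ Ioo a b, HasDerivAt T (κ t * .I * T t) t) :
    ∀ t ∈ Icc a b, T t = T a * cexp ((∫ s in a..t, κ s : ℝ) * .I) := by
  -- `exp (-iθ) T` is absolutely continuous with derivative zero almost everywhere.
  set θ : ℝ → ℝ := fun t => ∫ s in a..t, κ s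
  have hT_ac : AbsolutelyContinuousOnInterval T a b := by
    refine absolutelyContinuousOnInterval_of_hasDerivAt hab hT hderiv ?_
    have hcont : ContinuousOn (fun t => .I * T t) (uIcc a b) := uIcc_of_le hab ▸ hT.const_mul _
    have hκ' : IntervalIntegrable (fun t => (κ t : ℂ)) volume a b := ⟨hκ.1.ofReal, hκ.2.ofReal⟩
    simpa only [mul_assoc] using hκ'.mul_continuousOn hcont
  have hexp_ac : AbsolutelyContinuousOnInterval (fun t => cexp ((-θ t : ℝ) * .I)) a b :=
    absolutelyContinuousOnInterval_of_dist_le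
      (hκ.absolutelyContinuousOnInterval_intervalIntegral left_mem_uIcc)
      fun x _ y _ => (dist_exp_ofReal_mul_I_le _ _).trans_eq (dist_neg_neg _ _)
  have hq_deriv : ∀ᵐ t, t ∈ uIcc a b → HasDerivAt (fun t => cexp ((-θ t : ℝ) * .I) • T t) 0 t := by
    filter_upwards [hκ.ae_hasDerivAt_integral, Measure.ae_ne volume a, Measure.ae_ne volume b]
      with t hθ hta htb ht
    have hIoo : t ∈ Ioo a b := by
      rw [uIcc_of_le hab] at ht
      exact ⟨ht.1.lt_of_ne' hta, ht.2.lt_of_ne htb⟩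
    have hexp := ((hθ ht a left_mem_uIcc).neg.ofReal_comp.mul_const Complex.I).cexp
    refine (hexp.smul (hderiv t hIoo)).congr_deriv ?_
    simp only [smul_eq_mul, Complex.ofReal_neg]
    ring
  obtain ⟨C, hC⟩ := (hexp_ac.smul hT_ac).const_of_ae_hasDerivAt_zero hq_deriv
  have hCa : T a = C := by simpa [θ] using hC a left_mem_uIcc
  intro t ht
  have hCt : cexp ((-θ t : ℝ) * .I) * T t = C := hC t (uIcc_of_le hab ▸ ht)
  rw [hCa, ← hCt, mul_right_comm, ← Complex.exp_add]
  simp [θ]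

lemma integral_mul_primitive_eq_integral_tail_mul {p h : ℝ → ℝ} {a b : ℝ}
    (hp : IntervalIntegrable p volume a b) (hh : IntervalIntegrable h volume a b) :
    ∫ t in a..b, p t * ∫ s in a..t, h s = ∫ t in a..b, (∫ s in t..b, p s) * h t := by
  have hp_ac := hp.absolutelyContinuousOnInterval_intervalIntegral right_mem_uIcc
  have hh_ac := hh.absolutelyContinuousOnInterval_intervalIntegral left_mem_uIcc
  have hparts := hp_ac.integral_mul_deriv_eq_deriv_mul hh_ac
  have hleft : ∫ t in a..b, (∫ s in b..t, p s) * deriv (fun t => ∫ s in a..t, h s) t =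
      -∫ t in a..b, (∫ s in t..b, p s) * h t := by
    rw [← intervalIntegral.integral_neg]
    refine intervalIntegral.integral_congr_ae ?_
    filter_upwards [hh.ae_hasDerivAt_integral] with t hderiv ht
    rw [(hderiv (uIoc_subset_uIcc ht) a left_mem_uIcc).deriv,
      intervalIntegral.integral_symm t b, neg_mul]
  have hright : ∫ t in a..b, deriv (fun t => ∫ s in b..t, p s) t * ∫ s in a..t, h s =
      ∫ t in a..b, p t * ∫ s in a..t, h s := by
    refine intervalIntegral.integral_congr_ae ?_
    filter_upwards [hp.ae_hasDerivAt_integral] with t hderiv ht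
    rw [(hderiv (uIoc_subset_uIcc ht) b right_mem_uIcc).deriv]
  simp only [intervalIntegral.integral_same, zero_mul, mul_zero, sub_zero, zero_sub] at hparts
  rw [hleft, hright] at hparts
  exact (neg_injective hparts).symm

end AbsoluteContinuity

/-- The angle turned through up to parameter `t` by a curve whose tangent turns at rate `k`. -/
def turningAngle (k : ℝ → ℝ) (t : ℝ) : ℝ := ∫ s in (0 : ℝ)..t, k s

/-- The endpoint displacement `γ(1) - γ(0)`, with `ℝ²` identified with `ℂ`, of the unit-speed curve
of length `1` with initial tangent `1` and curvature `k`. -/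
def displacement (k : ℝ → ℝ) : ℂ := ∫ t in (0 : ℝ)..1, cexp (turningAngle k t * .I)

/-- Arclength from `0`, divided by total length, on a curve parametrized over `[0, 1]` with
speed `v`. -/
def normalizedArclength (v : ℝ → ℝ) (t : ℝ) : ℝ := (∫ s in (0 : ℝ)..t, v s) / ∫ s in (0 : ℝ)..1, v s

/-- The curvature, as a function of normalized arclength, of a curve over `[0, 1]` with speed `v`
whose tangent turns at rate `κ` in the given parameter, after rescaling the curve to length `1`. -/
def arclengthCurvature (v κ : ℝ → ℝ) (σ : ℝ) : ℝ :=
  let t := Function.invFunOn (normalizedArclength v) (Icc 0 1) σ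
  (∫ s in (0 : ℝ)..1, v s) * κ t / v t

section Arclength

variable {v κ : ℝ → ℝ}

@[simp]
lemma normalizedArclength_zero : normalizedArclength v 0 = 0 := by
  simp [normalizedArclength]

variable (hv : ContinuousOn v (Icc 0 1)) (hpos : ∀ t ∈ Icc (0 : ℝ) 1, 0 < v t)
include hv

lemma hasDerivAt_normalizedArclength {t : ℝ} (ht : t ∈ Ioo (0 : ℝ) 1) :
    HasDerivAt (normalizedArclength v) (v t / ∫ s in (0 : ℝ)..1, v s) t := by
  have hint : IntervalIntegrable v volume 0 t :=
    (hv.mono (Icc_subset_Icc_right ht.2.le)).intervalIntegrable_of_Icc ht.1.le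
  have hv' : ContinuousOn v (Ioo 0 1) := hv.mono Ioo_subset_Icc_self
  exact (intervalIntegral.integral_hasDerivAt_right hint
    (hv'.stronglyMeasurableAtFilter isOpen_Ioo t ht)
    (hv'.continuousAt (isOpen_Ioo.mem_nhds ht))).div_const _

lemma continuousOn_normalizedArclength : ContinuousOn (normalizedArclength v) (Icc 0 1) := by
  have hint : IntegrableOn v (uIcc 0 1) := uIcc_of_le (zero_le_one' ℝ) ▸ hv.integrableOn_Icc
  simpa only [uIcc_of_le (zero_le_one' ℝ)] using!
    (intervalIntegral.continuousOn_primitive_interval hint).div_const _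

include hpos

lemma integral_speed_pos : 0 < ∫ s in (0 : ℝ)..1, v s :=
  intervalIntegral.intervalIntegral_pos_of_pos_on (hv.intervalIntegrable_of_Icc zero_le_one)
    (fun t ht => hpos t (Ioo_subset_Icc_self ht)) zero_lt_one

lemma normalizedArclength_one : normalizedArclength v 1 = 1 :=
  div_self (integral_speed_pos hv hpos).ne'

lemma strictMonoOn_normalizedArclength : StrictMonoOn (normalizedArclength v) (Icc 0 1) := by
  refine strictMonoOn_of_deriv_pos (convex_Icc 0 1) (continuousOn_normalizedArclength hv)
    fun t ht => ?_
  rw [interior_Icc] at ht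
  rw [(hasDerivAt_normalizedArclength hv ht).deriv]
  exact div_pos (hpos t (Ioo_subset_Icc_self ht)) (integral_speed_pos hv hpos)

lemma arclengthCurvature_normalizedArclength {t : ℝ} (ht : t ∈ Icc (0 : ℝ) 1) :
    arclengthCurvature v κ (normalizedArclength v t) = (∫ s in (0 : ℝ)..1, v s) * κ t / v t := by
  rw [arclengthCurvature,
    (strictMonoOn_normalizedArclength hv hpos).injOn.leftInvOn_invFunOn ht]

lemma integral_comp_normalizedArclength {E : Type*} [NormedAddCommGroup E] [NormedSpace ℝ E]
    (f : ℝ → E) {t : ℝ} (ht : t ∈ Icc (0 : ℝ) 1) :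
    ∫ s in (0 : ℝ)..t, (v s / ∫ r in (0 : ℝ)..1, v r) • f (normalizedArclength v s) =
      ∫ σ in (0 : ℝ)..normalizedArclength v t, f σ := by
  have hIoo : Ioo (min 0 t) (max 0 t) ⊆ Ioo 0 1 := by
    simpa only [min_eq_left ht.1, max_eq_right ht.1] using Ioo_subset_Ioo_right ht.2
  simpa only [normalizedArclength_zero, Function.comp_apply] using
    intervalIntegral.integral_deriv_smul_comp_of_deriv_nonneg (g := f)
      ((continuousOn_normalizedArclength hv).mono
        (uIcc_of_le ht.1 ▸ Icc_subset_Icc_right ht.2))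
      (fun s hs => hasDerivAt_normalizedArclength hv (hIoo hs))
      (fun s hs => (div_pos (hpos s (Ioo_subset_Icc_self (hIoo hs)))
        (integral_speed_pos hv hpos)).le)

lemma intervalIntegrable_of_comp_normalizedArclength {f g : ℝ → ℝ}
    (hg : IntervalIntegrable g volume 0 1)
    (hfg : ∀ t ∈ Icc (0 : ℝ) 1,
      (v t / ∫ s in (0 : ℝ)..1, v s) * f (normalizedArclength v t) = g t) :
    IntervalIntegrable f volume 0 1 := by
  have hIoo : Ioo (min 0 1) (max 0 1) ⊆ Ioo (0 : ℝ) 1 := by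
    rw [min_eq_left zero_le_one, max_eq_right zero_le_one]
  have hiff := intervalIntegral.integrable_deriv_smul_comp_iff_of_deriv_nonneg (g := f)
    (uIcc_of_le (zero_le_one' ℝ) ▸ continuousOn_normalizedArclength hv)
    (fun s hs => hasDerivAt_normalizedArclength hv (hIoo hs))
    (fun s hs => (div_pos (hpos s (Ioo_subset_Icc_self (hIoo hs)))
      (integral_speed_pos hv hpos)).le)
  rw [normalizedArclength_zero, normalizedArclength_one hv hpos] at hiff
  refine hiff.1 (hg.congr fun t ht => (hfg t ?_).symm)
  exact Ioc_subset_Icc_self (uIoc_of_le (zero_le_one' ℝ) ▸ ht)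

lemma mul_arclengthCurvature {t : ℝ} (ht : t ∈ Icc (0 : ℝ) 1) :
    (v t / ∫ s in (0 : ℝ)..1, v s) * arclengthCurvature v κ (normalizedArclength v t) = κ t := by
  have hL := (integral_speed_pos hv hpos).ne'
  have hvt := (hpos t ht).ne'
  rw [arclengthCurvature_normalizedArclength hv hpos ht]
  field_simp

lemma mul_arclengthCurvature_sq {t : ℝ} (ht : t ∈ Icc (0 : ℝ) 1) :
    (v t / ∫ s in (0 : ℝ)..1, v s) * arclengthCurvature v κ (normalizedArclength v t) ^ 2 =
      (∫ s in (0 : ℝ)..1, v s) * (κ t ^ 2 / v t) := by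
  rw [sq, ← mul_assoc, mul_arclengthCurvature hv hpos ht,
    arclengthCurvature_normalizedArclength hv hpos ht]
  ring

lemma turningAngle_arclengthCurvature {t : ℝ} (ht : t ∈ Icc (0 : ℝ) 1) :
    turningAngle (arclengthCurvature v κ) (normalizedArclength v t) = turningAngle κ t := by
  rw [turningAngle, ← integral_comp_normalizedArclength hv hpos _ ht]
  exact intervalIntegral.integral_congr fun s hs => mul_arclengthCurvature hv hpos
    (Icc_subset_Icc_right ht.2 (uIcc_of_le ht.1 ▸ hs))

lemma displacement_arclengthCurvature :
    (∫ s in (0 : ℝ)..1, v s) • displacement (arclengthCurvature v κ) =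
      ∫ t in (0 : ℝ)..1, v t • cexp (turningAngle κ t * .I) := by
  have hL := (integral_speed_pos hv hpos).ne'
  have hchange := integral_comp_normalizedArclength hv hpos
    (fun σ => cexp (turningAngle (arclengthCurvature v κ) σ * .I)) (right_mem_Icc.2 zero_le_one)
  rw [normalizedArclength_one hv hpos] at hchange
  rw [displacement, ← hchange, ← intervalIntegral.integral_smul]
  refine intervalIntegral.integral_congr fun t ht => ?_
  have hangle := turningAngle_arclengthCurvature hv hpos (κ := κ)
    (uIcc_of_le (zero_le_one' ℝ) ▸ ht)
  simp only [hangle, smul_smul, mul_div_cancel₀ _ hL]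

lemma integral_arclengthCurvature_sq :
    ∫ σ in (0 : ℝ)..1, arclengthCurvature v κ σ ^ 2 =
      (∫ t in (0 : ℝ)..1, v t) * ∫ t in (0 : ℝ)..1, κ t ^ 2 / v t := by
  have hchange := integral_comp_normalizedArclength hv hpos
    (fun σ => arclengthCurvature v κ σ ^ 2) (right_mem_Icc.2 zero_le_one)
  rw [normalizedArclength_one hv hpos] at hchange
  rw [← hchange, ← intervalIntegral.integral_const_mul]
  exact intervalIntegral.integral_congr fun t ht => mul_arclengthCurvature_sq hv hpos
    (uIcc_of_le (zero_le_one' ℝ) ▸ ht)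

lemma memLp_arclengthCurvature (hκ : IntervalIntegrable κ volume 0 1)
    (hκ_sq : IntervalIntegrable (fun t => κ t ^ 2 / v t) volume 0 1) :
    MemLp (arclengthCurvature v κ) 2 (volume.restrict (Ioc 0 1)) := by
  have hint : IntervalIntegrable (arclengthCurvature v κ) volume 0 1 :=
    intervalIntegrable_of_comp_normalizedArclength hv hpos hκ
      fun t => mul_arclengthCurvature hv hpos
  have hint_sq : IntervalIntegrable (fun σ => arclengthCurvature v κ σ ^ 2) volume 0 1 :=
    intervalIntegrable_of_comp_normalizedArclength hv hpos
      (hκ_sq.const_mul (∫ s in (0 : ℝ)..1, v s)) fun t => mul_arclengthCurvature_sq hv hpos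
  exact (memLp_two_iff_integrable_sq hint.1.aestronglyMeasurable).2 hint_sq.1

end Arclength

section IntegralExp

variable {α : Type*} [TopologicalSpace α] [CompactSpace α] [MeasurableSpace α] [BorelSpace α]
  (μ : Measure α) [IsFiniteMeasure μ]

lemma exists_hasStrictFDerivAt_integral_exp {H : Type*} [NormedAddCommGroup H] [NormedSpace ℝ H]
    (A : H →L[ℝ] C(α, ℂ)) (g : H) :
    ∃ D : H →L[ℝ] ℂ, HasStrictFDerivAt (fun h => ∫ t, cexp (A h t) ∂μ) D g ∧
      ∀ h, D h = ∫ t, cexp (A g t) * A h t ∂μ := by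
  let J : C(α, ℂ) →L[ℝ] ℂ := L1.integralCLM.comp (ContinuousMap.toLp 1 μ ℝ)
  have hJ (f : C(α, ℂ)) : J f = ∫ t, f t ∂μ := by
    have hL1 : J f = ∫ t, ContinuousMap.toLp (E := ℂ) 1 μ ℝ f t ∂μ :=
      (L1.integral_eq _).symm.trans (L1.integral_eq_integral _)
    rw [hL1]
    exact integral_congr_ae (ContinuousMap.coeFn_toLp μ f)
  have hexp (h : H) (t : α) : NormedSpace.exp (A h) t = cexp (A h t) := by
    rw [NormedSpace.exp_continuousMap_eq, Complex.exp_eq_exp_ℂ]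
    rfl
  have hderiv : HasStrictFDerivAt (fun h => J (NormedSpace.exp (A h)))
      (J.comp ((NormedSpace.exp (A g) • (1 : C(α, ℂ) →L[ℝ] C(α, ℂ))).comp A)) g :=
    J.hasStrictFDerivAt.comp g ((hasStrictFDerivAt_exp (𝕂 := ℝ)).comp g A.hasStrictFDerivAt)
  refine ⟨_, by simpa only [hJ, hexp] using hderiv, fun h => (hJ _).trans ?_⟩
  exact integral_congr_ae (.of_forall fun t => congrArg (· * A h t) (hexp g t))

end IntegralExp

/-- The Hilbert space `L²(0, 1)` of curvatures of unit-speed curves of length `1`. -/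
abbrev CurvatureSpace : Type := Lp ℝ 2 (volume.restrict (Ioc (0 : ℝ) 1))

section CurvatureSpace

lemma turningAngle_congr {k k' : ℝ → ℝ} (h : k =ᵐ[volume.restrict (Ioc 0 1)] k') {t : ℝ}
    (ht : t ∈ Icc (0 : ℝ) 1) : turningAngle k t = turningAngle k' t := by
  refine intervalIntegral.integral_congr_ae_restrict (ae_restrict_of_ae_restrict_of_subset ?_ h)
  exact uIoc_of_le ht.1 ▸ Ioc_subset_Ioc_right ht.2

lemma displacement_congr {k k' : ℝ → ℝ} (h : k =ᵐ[volume.restrict (Ioc 0 1)] k') :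
    displacement k = displacement k' := by
  refine intervalIntegral.integral_congr fun t ht => ?_
  simp only [turningAngle_congr h (uIcc_of_le (zero_le_one' ℝ) ▸ ht)]

lemma displacement_zero : displacement 0 = 1 := by
  simp [displacement, turningAngle]

lemma displacement_const_two_pi : displacement (fun _ => 2 * Real.pi) = 0 := by
  have hc : (2 * Real.pi * Complex.I : ℂ) ≠ 0 := Complex.two_pi_I_ne_zero
  have hint := integral_exp_mul_complex (a := 0) (b := 1) hc
  simp only [Complex.ofReal_zero, Complex.ofReal_one, mul_zero, mul_one, Complex.exp_zero,
    Complex.exp_two_pi_mul_I, sub_self, zero_div] at hint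
  rw [displacement, ← hint]
  congr 1 with t
  simp only [turningAngle, intervalIntegral.integral_const, sub_zero, smul_eq_mul]
  push_cast
  ring_nf

lemma exists_displacement_eq_zero : ∃ h : CurvatureSpace, displacement h = 0 :=
  ⟨(memLp_const (2 * Real.pi)).toLp,
    (displacement_congr (MemLp.coeFn_toLp _)).trans displacement_const_two_pi⟩

lemma ne_zero_of_displacement_eq_zero {h : CurvatureSpace} (hh : displacement h = 0) : h ≠ 0 := by
  rintro rfl
  rw [displacement_congr (Lp.coeFn_zero ..), displacement_zero] at hh
  exact one_ne_zero hh

lemma norm_sq_eq_integral {h : CurvatureSpace} {k : ℝ → ℝ}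
    (hk : h =ᵐ[volume.restrict (Ioc 0 1)] k) : ‖h‖ ^ 2 = ∫ t in (0 : ℝ)..1, k t ^ 2 := by
  rw [← real_inner_self_eq_norm_sq, L2.inner_def, intervalIntegral.integral_of_le zero_le_one]
  refine integral_congr_ae ?_
  filter_upwards [hk] with t ht
  rw [real_inner_self_eq_norm_sq, ht, Real.norm_eq_abs, sq_abs]

lemma CurvatureSpace.intervalIntegrable (h : CurvatureSpace) : IntervalIntegrable h volume 0 1 :=
  (intervalIntegrable_iff_integrableOn_Ioc_of_le zero_le_one).2
    ((Lp.memLp h).integrable one_le_two)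

lemma continuousOn_turningAngle {k : ℝ → ℝ} (hk : IntervalIntegrable k volume 0 1) :
    ContinuousOn (turningAngle k) (Icc 0 1) :=
  uIcc_of_le (zero_le_one' ℝ) ▸
    intervalIntegral.continuousOn_primitive_interval' hk left_mem_uIcc

lemma hasDerivAt_turningAngle {k : ℝ → ℝ} (hk : Continuous k) (t : ℝ) :
    HasDerivAt (turningAngle k) (k t) t :=
  (hk.integral_hasStrictDerivAt 0 t).hasDerivAt

lemma intervalIntegrable_exp_turningAngle {k : ℝ → ℝ} (hk : IntervalIntegrable k volume 0 1) :
    IntervalIntegrable (fun t => cexp (turningAngle k t * .I)) volume 0 1 := by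
  have hθ := continuousOn_turningAngle hk
  exact ContinuousOn.intervalIntegrable_of_Icc zero_le_one (by fun_prop)

lemma re_displacement {k : ℝ → ℝ} (hk : IntervalIntegrable k volume 0 1) :
    (displacement k).re = ∫ t in (0 : ℝ)..1, Real.cos (turningAngle k t) := by
  simpa only [displacement, Complex.reCLM_apply, Complex.exp_ofReal_mul_I_re] using
    (Complex.reCLM.intervalIntegral_comp_comm (intervalIntegrable_exp_turningAngle hk)).symm

lemma im_displacement {k : ℝ → ℝ} (hk : IntervalIntegrable k volume 0 1) :
    (displacement k).im = ∫ t in (0 : ℝ)..1, Real.sin (turningAngle k t) := by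
  simpa only [displacement, Complex.imCLM_apply, Complex.exp_ofReal_mul_I_im] using
    (Complex.imCLM.intervalIntegral_comp_comm (intervalIntegrable_exp_turningAngle hk)).symm

lemma turningAngle_eq_inner (h : CurvatureSpace) {t : ℝ} (ht : t ∈ Icc (0 : ℝ) 1) :
    turningAngle h t = inner ℝ h (indicatorConstLp 2 measurableSet_Ioc
      (measure_ne_top (volume.restrict (Ioc (0 : ℝ) 1)) (Ioc 0 t)) 1) := by
  rw [real_inner_comm, L2.inner_indicatorConstLp_one, turningAngle,
    intervalIntegral.integral_of_le ht.1, Measure.restrict_restrict measurableSet_Ioc,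
    inter_eq_left.2 (Ioc_subset_Ioc_right ht.2)]

lemma abs_turningAngle_le (h : CurvatureSpace) {t : ℝ} (ht : t ∈ Icc (0 : ℝ) 1) :
    |turningAngle h t| ≤ ‖h‖ := by
  rw [turningAngle_eq_inner h ht]
  refine (abs_real_inner_le_norm _ _).trans (mul_le_of_le_one_right (norm_nonneg h) ?_)
  have : IsProbabilityMeasure (volume.restrict (Ioc (0 : ℝ) 1)) := ⟨by simp⟩
  refine norm_indicatorConstLp_le.trans ?_
  rw [norm_one, one_mul]
  exact Real.rpow_le_one measureReal_nonneg measureReal_le_one (by positivity)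

/-- The operator taking a curvature in `L²(0, 1)` to its turning angle in `C([0, 1])`. -/
def turningAngleCLM : CurvatureSpace →L[ℝ] C(unitInterval, ℝ) :=
  let angle (h : CurvatureSpace) : C(unitInterval, ℝ) :=
    ⟨fun t => turningAngle h t, continuousOn_iff_continuous_domRestrict.1
      (continuousOn_turningAngle h.intervalIntegrable)⟩
  have angle_apply (h : CurvatureSpace) (t : unitInterval) : angle h t = turningAngle h t := rfl
  LinearMap.mkContinuous
    { toFun := angle
      map_add' f g := by
        ext t
        simp only [angle_apply, ContinuousMap.add_apply, turningAngle_eq_inner _ t.2,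
          inner_add_left]
      map_smul' c h := by
        ext t
        simp only [angle_apply, ContinuousMap.smul_apply, turningAngle_eq_inner _ t.2,
          real_inner_smul_left, smul_eq_mul, RingHom.id_apply] }
    1 fun h => by
      rw [one_mul]
      exact (ContinuousMap.norm_le _ (norm_nonneg h)).2 fun t => abs_turningAngle_le h t.2

@[simp]
lemma turningAngleCLM_apply (h : CurvatureSpace) (t : unitInterval) :
    turningAngleCLM h t = turningAngle h t := rfl

lemma intervalIntegral_eq_integral_unitInterval (f : ℝ → ℂ) :
    ∫ t in (0 : ℝ)..1, f t = ∫ t : unitInterval, f t := by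
  rw [integral_subtype measurableSet_Icc, integral_Icc_eq_integral_Ioc,
    intervalIntegral.integral_of_le zero_le_one]

lemma exists_hasStrictFDerivAt_displacement (g : CurvatureSpace) :
    ∃ D : CurvatureSpace →L[ℝ] ℂ,
      HasStrictFDerivAt (fun h : CurvatureSpace => displacement h) D g ∧
      ∀ h : CurvatureSpace,
        D h = ∫ t in (0 : ℝ)..1, cexp (turningAngle g t * .I) * (turningAngle h t * .I) := by
  let mulI : ℝ →L[ℝ] ℂ := (1 : ℝ →L[ℝ] ℝ).smulRight .I
  let A := (mulI.compLeftContinuous ℝ unitInterval).comp turningAngleCLM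
  have hA (h : CurvatureSpace) (t : unitInterval) : A h t = turningAngle h t * .I := by
    simp [A, mulI]
  simpa only [hA, displacement, intervalIntegral_eq_integral_unitInterval] using
    exists_hasStrictFDerivAt_integral_exp volume A g

lemma tendsto_displacement {u : ℕ → CurvatureSpace} {g : CurvatureSpace}
    (hu : ∀ w, Tendsto (fun n => inner ℝ (u n) w) atTop (𝓝 (inner ℝ g w))) :
    Tendsto (fun n => displacement (u n)) atTop (𝓝 (displacement g)) := by
  refine intervalIntegral.tendsto_integral_filter_of_dominated_convergence (fun _ => 1)
    (.of_forall fun n => ?_) (.of_forall fun n => .of_forall fun t _ => ?_)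
    intervalIntegrable_const (.of_forall fun t ht => ?_)
  · have hcont : ContinuousOn (fun t => cexp (turningAngle (u n) t * .I)) (Icc 0 1) := by
      have := continuousOn_turningAngle (u n).intervalIntegrable
      fun_prop
    rw [uIoc_of_le zero_le_one]
    exact (hcont.mono Ioc_subset_Icc_self).aestronglyMeasurable measurableSet_Ioc
  · rw [Complex.norm_exp_ofReal_mul_I]
  · have ht' : t ∈ Icc (0 : ℝ) 1 := Ioc_subset_Icc_self (uIoc_of_le (zero_le_one' ℝ) ▸ ht)
    simp only [turningAngle_eq_inner _ ht']
    have hexp : Continuous fun θ : ℝ => cexp (θ * .I) := by fun_prop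
    exact (hexp.tendsto _).comp (hu _)

end CurvatureSpace

section Minimizer

lemma exists_minimal_displacement_eq_zero :
    ∃ g : CurvatureSpace, displacement g = 0 ∧
      ∀ h : CurvatureSpace, displacement h = 0 → ‖g‖ ≤ ‖h‖ := by
  have : Fact ((2 : ENNReal) ≠ ⊤) := ⟨by norm_num⟩
  refine exists_forall_norm_le_of_weakly_seq_closed (S := {h : CurvatureSpace | displacement h = 0})
    exists_displacement_eq_zero fun u g hu hlim => ?_
  have hzero : (fun n => displacement (u n)) = fun _ => 0 := funext hu
  exact tendsto_nhds_unique (tendsto_displacement hlim) (hzero ▸ tendsto_const_nhds)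

lemma exists_lagrange_multiplier {g : CurvatureSpace} (hg : displacement g = 0)
    (hmin : ∀ h : CurvatureSpace, displacement h = 0 → ‖g‖ ≤ ‖h‖) :
    ∃ (ℓ : ℂ →L[ℝ] ℝ) (c : ℝ), (ℓ ≠ 0 ∨ c ≠ 0) ∧ ∀ h : CurvatureSpace,
      ∫ t in (0 : ℝ)..1, ℓ (cexp (turningAngle g t * .I) * .I) * turningAngle h t =
        c * inner ℝ g h := by
  obtain ⟨D, hD, hD_apply⟩ := exists_hasStrictFDerivAt_displacement g
  have hext : IsLocalExtrOn (fun h : CurvatureSpace => ‖h‖ ^ 2)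
      {h | displacement h = displacement g} g :=
    .inl <| eventually_of_mem self_mem_nhdsWithin fun h hh =>
      pow_le_pow_left₀ (norm_nonneg g) (hmin h (hh.trans hg)) 2
  obtain ⟨ℓ, c, hne, hcrit⟩ :=
    hext.exists_linear_map_of_hasStrictFDerivAt hD (hasStrictFDerivAt_norm_sq g)
  let ℓ' : ℂ →L[ℝ] ℝ := LinearMap.toContinuousLinearMap ℓ
  have hne' : ℓ' ≠ 0 ∨ -2 * c ≠ 0 := by
    contrapose! hne
    simpa [ℓ'] using hne
  refine ⟨ℓ', -2 * c, hne', fun h => ?_⟩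
  have hcont : ContinuousOn
      (fun t => cexp (turningAngle g t * .I) * (turningAngle h t * .I)) (uIcc 0 1) := by
    have hθg := continuousOn_turningAngle g.intervalIntegrable
    have hθh := continuousOn_turningAngle h.intervalIntegrable
    rw [uIcc_of_le zero_le_one]
    fun_prop
  have hint : ∫ t in (0 : ℝ)..1, ℓ' (cexp (turningAngle g t * .I) * .I) * turningAngle h t =
      ℓ (D h) := by
    rw [hD_apply, ← LinearMap.coe_toContinuousLinearMap' ℓ,
      ← ℓ'.intervalIntegral_comp_comm hcont.intervalIntegrable]
    refine intervalIntegral.integral_congr fun t _ => ?_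
    simp only [mul_comm _ (turningAngle h t), ← smul_eq_mul (a := turningAngle h t), ← map_smul,
      Complex.real_smul]
    ring_nf
  have hcrit_h : ℓ (D h) + c * (2 * inner ℝ g h) = 0 := by
    simpa only [smul_apply, innerSL_apply_apply, nsmul_eq_mul, Nat.cast_ofNat,
      smul_eq_mul] using hcrit h
  linarith

lemma continuousOn_integral_tail {p : ℝ → ℝ} {a b : ℝ} (hab : a ≤ b)
    (hp : ContinuousOn p (Icc a b)) : ContinuousOn (fun t => ∫ s in t..b, p s) (Icc a b) := by
  rw [← uIcc_of_le hab] at hp ⊢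
  exact intervalIntegral.continuousOn_primitive_interval_left hp.integrableOn_uIcc

lemma ae_eq_of_forall_integral_mul_turningAngle {p : ℝ → ℝ} {g : CurvatureSpace} {c : ℝ}
    (hp : ContinuousOn p (Icc 0 1))
    (hpair : ∀ h : CurvatureSpace, ∫ t in (0 : ℝ)..1, p t * turningAngle h t = c * inner ℝ g h) :
    (fun t => ∫ s in t..1, p s) =ᵐ[volume.restrict (Ioc 0 1)] fun t => c * g t := by
  have hp_int : IntervalIntegrable p volume 0 1 := hp.intervalIntegrable_of_Icc zero_le_one
  have htail := continuousOn_integral_tail zero_le_one hp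
  have hmem : MemLp (fun t => ∫ s in t..1, p s) 2 (volume.restrict (Ioc 0 1)) := by
    obtain ⟨C, hC⟩ := isCompact_Icc.exists_bound_of_continuousOn htail
    refine .of_bound ((htail.mono Ioc_subset_Icc_self).aestronglyMeasurable measurableSet_Ioc) C ?_
    exact ae_restrict_of_forall_mem measurableSet_Ioc fun t ht => hC t (Ioc_subset_Icc_self ht)
  have heq : hmem.toLp = c • g := by
    refine ext_inner_right ℝ fun (h : CurvatureSpace) => ?_
    rw [real_inner_smul_left, ← hpair h]
    simp only [turningAngle]
    rw [integral_mul_primitive_eq_integral_tail_mul hp_int h.intervalIntegrable, L2.inner_def,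
      intervalIntegral.integral_of_le zero_le_one]
    refine integral_congr_ae ?_
    filter_upwards [hmem.coeFn_toLp] with t ht
    simp only [ht, RCLike.inner_apply, conj_trivial, mul_comm]
  filter_upwards [hmem.coeFn_toLp, Lp.coeFn_smul c g] with t hl hr
  rw [← hl, heq, hr, Pi.smul_apply, smul_eq_mul]

lemma eqOn_zero_of_ae_integral_tail_eq_zero {p : ℝ → ℝ} {a b : ℝ} (hab : a < b)
    (hp : ContinuousOn p (Icc a b))
    (hzero : (fun t => ∫ s in t..b, p s) =ᵐ[volume.restrict (Ioc a b)] 0) :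
    EqOn p 0 (Icc a b) := by
  rw [restrict_Ioc_eq_restrict_Icc] at hzero
  have htail : EqOn (fun t => ∫ s in t..b, p s) 0 (Icc a b) :=
    Measure.eqOn_Icc_of_ae_eq volume hab.ne hzero (continuousOn_integral_tail hab.le hp)
      continuousOn_const
  have hIoo : EqOn p 0 (Ioo a b) := fun t ht => by
    have hderiv : HasDerivAt (fun t => ∫ s in t..b, p s) (-p t) t :=
      intervalIntegral.integral_hasDerivAt_left
        ((hp.mono (Icc_subset_Icc_left ht.1.le)).intervalIntegrable_of_Icc ht.2.le)
        ((hp.mono Ioo_subset_Icc_self).stronglyMeasurableAtFilter isOpen_Ioo t ht)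
        (hp.continuousAt (Icc_mem_nhds ht.1 ht.2))
    have hconst : (fun t => ∫ s in t..b, p s) =ᶠ[𝓝 t] fun _ => 0 :=
      htail.eventuallyEq_of_mem (Icc_mem_nhds ht.1 ht.2)
    exact neg_eq_zero.1 (hderiv.unique ((hasDerivAt_const t 0).congr_of_eventuallyEq hconst))
  exact hIoo.of_subset_closure hp continuousOn_const Ioo_subset_Icc_self (closure_Ioo hab.ne).ge

lemma exists_cos_turningAngle_eq_zero {k : ℝ → ℝ} (hk : IntervalIntegrable k volume 0 1)
    (hclosed : displacement k = 0) : ∃ t ∈ Icc (0 : ℝ) 1, Real.cos (turningAngle k t) = 0 := by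
  have hcos : ContinuousOn (fun t => Real.cos (turningAngle k t)) (uIcc 0 1) := by
    have hθ := continuousOn_turningAngle hk
    rw [uIcc_of_le zero_le_one]
    fun_prop
  obtain ⟨t, ht, hmean⟩ := exists_eq_interval_average zero_ne_one hcos
  rw [interval_average_eq, ← re_displacement hk, hclosed, Complex.zero_re, smul_zero] at hmean
  exact ⟨t, uIcc_of_le (zero_le_one' ℝ) ▸ uIoo_subset_uIcc_self ht, hmean⟩

lemma eq_zero_of_forall_tangent_mul_I_eq_zero {k : ℝ → ℝ} (hk : IntervalIntegrable k volume 0 1)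
    (hclosed : displacement k = 0) {ℓ : ℂ →L[ℝ] ℝ}
    (hℓ : ∀ t ∈ Icc (0 : ℝ) 1, ℓ (cexp (turningAngle k t * .I) * .I) = 0) : ℓ = 0 := by
  have hℓ_I : ℓ .I = 0 := by
    simpa [turningAngle] using hℓ 0 (left_mem_Icc.2 zero_le_one)
  obtain ⟨t, ht, hcos⟩ := exists_cos_turningAngle_eq_zero hk hclosed
  have hsin : Real.sin (turningAngle k t) ≠ 0 := fun hsin => by
    simpa [hsin, hcos] using Real.sin_sq_add_cos_sq (turningAngle k t)
  have hnormal : cexp (turningAngle k t * .I) * .I = -Real.sin (turningAngle k t) • (1 : ℂ) := by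
    rw [Complex.exp_mul_I, ← Complex.ofReal_cos, hcos, Complex.ofReal_zero, zero_add, mul_assoc,
      Complex.I_mul_I, ← Complex.ofReal_sin]
    simp
  have hℓ_one : ℓ 1 = 0 := by
    have hℓt := hℓ t ht
    rw [hnormal, map_smul, smul_eq_mul] at hℓt
    exact (mul_eq_zero.1 hℓt).resolve_left (neg_ne_zero.2 hsin)
  ext z
  rw [show z = z.re • (1 : ℂ) + z.im • .I by simp, map_add, map_smul, map_smul, hℓ_one, hℓ_I]
  simp

lemma exists_continuous_ae_eq_of_minimal {g : CurvatureSpace} (hg : displacement g = 0)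
    (hmin : ∀ h : CurvatureSpace, displacement h = 0 → ‖g‖ ≤ ‖h‖) :
    ∃ k : ℝ → ℝ, Continuous k ∧ k =ᵐ[volume.restrict (Ioc 0 1)] g := by
  obtain ⟨ℓ, c, hne, hpair⟩ := exists_lagrange_multiplier hg hmin
  have hp : ContinuousOn (fun t => ℓ (cexp (turningAngle g t * .I) * .I)) (Icc 0 1) := by
    have := continuousOn_turningAngle g.intervalIntegrable
    fun_prop
  have heuler := ae_eq_of_forall_integral_mul_turningAngle hp hpair
  have hc : c ≠ 0 := by
    rintro rfl
    refine hne.elim (fun hℓ => hℓ ?_) (· rfl)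
    simp only [zero_mul] at heuler
    exact eq_zero_of_forall_tangent_mul_I_eq_zero g.intervalIntegrable hg
      (eqOn_zero_of_ae_integral_tail_eq_zero zero_lt_one hp heuler)
  have htail := continuousOn_integral_tail zero_le_one hp
  refine ⟨IccExtend (zero_le_one' ℝ) (domRestrict (Icc 0 1) fun t =>
    c⁻¹ * ∫ s in t..1, ℓ (cexp (turningAngle g s * .I) * .I)), ?_, ?_⟩
  · exact (continuousOn_iff_continuous_domRestrict.1 (htail.const_mul c⁻¹)).Icc_extend'
  · filter_upwards [heuler, ae_restrict_mem measurableSet_Ioc] with t ht ht_mem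
    rw [IccExtend_of_mem _ _ (Ioc_subset_Icc_self ht_mem), domRestrict_apply, ht,
      inv_mul_cancel_left₀ hc]

end Minimizer

namespace RegularCurve

/-- A drop: the curve begins and ends at the same point, possibly with different tangents. -/
def IsDrop (γ : RegularCurve) : Prop := γ.x 0 = γ.x 1 ∧ γ.y 0 = γ.y 1

/-- The velocity `γ'`, with `ℝ²` identified with `ℂ`. -/
def velocity (γ : RegularCurve) (t : ℝ) : ℂ := γ.xd t + γ.yd t * .I

/-- The speed `|γ'|`. -/
def speed (γ : RegularCurve) (t : ℝ) : ℝ := √(γ.xd t ^ 2 + γ.yd t ^ 2)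

/-- The unit tangent `γ' / |γ'|`. -/
def unitTangent (γ : RegularCurve) (t : ℝ) : ℂ := γ.velocity t / γ.speed t

/-- The rate `k |γ'|` at which the tangent turns in the parameter of the curve. -/
def turningRate (γ : RegularCurve) (t : ℝ) : ℝ :=
  (γ.xd t * γ.ydd t - γ.xdd t * γ.yd t) / (γ.xd t ^ 2 + γ.yd t ^ 2)

section Frenet

variable (γ : RegularCurve)

lemma elasticEnergy_eq_integral_turningRate :
    γ.elasticEnergy = ∫ t in (0 : ℝ)..1, γ.turningRate t ^ 2 / γ.speed t := by
  simp only [elasticEnergy, turningRate, speed, div_pow, div_div]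

lemma intervalIntegrable_turningRate_sq_div_speed :
    IntervalIntegrable (fun t => γ.turningRate t ^ 2 / γ.speed t) volume 0 1 := by
  simpa only [turningRate, speed, div_pow, div_div] using γ.intE

lemma elasticEnergy_nonneg : 0 ≤ γ.elasticEnergy :=
  intervalIntegral.integral_nonneg zero_le_one fun _ _ => by positivity

lemma length_nonneg : 0 ≤ γ.length :=
  intervalIntegral.integral_nonneg zero_le_one fun _ _ => by positivity

lemma continuousOn_xd : ContinuousOn γ.xd (Icc 0 1) := fun t ht => (γ.hxd t ht).continuousWithinAt

lemma continuousOn_yd : ContinuousOn γ.yd (Icc 0 1) := fun t ht => (γ.hyd t ht).continuousWithinAt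

lemma continuousOn_velocity : ContinuousOn γ.velocity (Icc 0 1) := by
  have := γ.continuousOn_xd
  have := γ.continuousOn_yd
  unfold velocity
  fun_prop

lemma continuousOn_speed : ContinuousOn γ.speed (Icc 0 1) :=
  ((γ.continuousOn_xd.pow 2).add (γ.continuousOn_yd.pow 2)).sqrt

lemma speed_pos : ∀ t ∈ Icc (0 : ℝ) 1, 0 < γ.speed t := fun t ht =>
  Real.sqrt_pos.2 ((γ.regular t ht).symm.lt_of_le (by positivity))

lemma ofReal_speed_ne_zero : ∀ t ∈ Icc (0 : ℝ) 1, (γ.speed t : ℂ) ≠ 0 := fun t ht =>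
  Complex.ofReal_ne_zero.2 (γ.speed_pos t ht).ne'

lemma continuousOn_unitTangent : ContinuousOn γ.unitTangent (Icc 0 1) := by
  have hspeed := γ.continuousOn_speed
  exact γ.continuousOn_velocity.div (by fun_prop) γ.ofReal_speed_ne_zero

variable {t : ℝ}

lemma hasDerivAt_xd (ht : t ∈ Ioo (0 : ℝ) 1) : HasDerivAt γ.xd (γ.xdd t) t :=
  (γ.hxd t (Ioo_subset_Icc_self ht)).hasDerivAt (Icc_mem_nhds ht.1 ht.2)

lemma hasDerivAt_yd (ht : t ∈ Ioo (0 : ℝ) 1) : HasDerivAt γ.yd (γ.ydd t) t :=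
  (γ.hyd t (Ioo_subset_Icc_self ht)).hasDerivAt (Icc_mem_nhds ht.1 ht.2)

lemma hasDerivAt_velocity (ht : t ∈ Ioo (0 : ℝ) 1) :
    HasDerivAt γ.velocity (γ.xdd t + γ.ydd t * .I) t :=
  (γ.hasDerivAt_xd ht).ofReal_comp.add ((γ.hasDerivAt_yd ht).ofReal_comp.mul_const _)

lemma hasDerivAt_speed (ht : t ∈ Ioo (0 : ℝ) 1) :
    HasDerivAt γ.speed ((γ.xd t * γ.xdd t + γ.yd t * γ.ydd t) / γ.speed t) t := by
  refine ((((γ.hasDerivAt_xd ht).pow 2).add ((γ.hasDerivAt_yd ht).pow 2)).sqrt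
    (γ.regular t (Ioo_subset_Icc_self ht))).congr_deriv ?_
  have := (γ.speed_pos t (Ioo_subset_Icc_self ht)).ne'
  change _ / (2 * γ.speed t) = _
  field_simp
  ring

lemma hasDerivAt_unitTangent (ht : t ∈ Ioo (0 : ℝ) 1) :
    HasDerivAt γ.unitTangent (γ.turningRate t * .I * γ.unitTangent t) t := by
  have hs := γ.ofReal_speed_ne_zero t (Ioo_subset_Icc_self ht)
  have hs_sq : (γ.speed t : ℂ) ^ 2 = γ.xd t ^ 2 + γ.yd t ^ 2 := by
    exact_mod_cast Real.sq_sqrt (by positivity : 0 ≤ γ.xd t ^ 2 + γ.yd t ^ 2)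
  refine ((γ.hasDerivAt_velocity ht).div (γ.hasDerivAt_speed ht).ofReal_comp hs).congr_deriv ?_
  have hκ : (γ.turningRate t : ℂ) =
      (γ.xd t * γ.ydd t - γ.xdd t * γ.yd t) / (γ.speed t : ℂ) ^ 2 := by
    rw [hs_sq, turningRate]
    push_cast
    rfl
  rw [hκ, unitTangent]
  push_cast
  field_simp
  rw [hs_sq, velocity]
  linear_combination (γ.yd t * (γ.xdd t * γ.yd t - γ.ydd t * γ.xd t) : ℂ) * Complex.I_sq

lemma aestronglyMeasurable_turningRate :
    AEStronglyMeasurable γ.turningRate (volume.restrict (Ioc 0 1)) := by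
  have hcont {f : ℝ → ℝ} (hf : ContinuousOn f (Icc 0 1)) :
      AEMeasurable f (volume.restrict (Ioc 0 1)) :=
    (hf.mono Ioc_subset_Icc_self).aemeasurable measurableSet_Ioc
  have hderiv {f f' : ℝ → ℝ} (hf : ∀ t ∈ Ioo (0 : ℝ) 1, HasDerivAt f (f' t) t) :
      AEMeasurable f' (volume.restrict (Ioc 0 1)) := by
    rw [← restrict_Ioo_eq_restrict_Ioc]
    exact (measurable_deriv f).aemeasurable.congr
      (ae_restrict_of_forall_mem measurableSet_Ioo fun t ht => (hf t ht).deriv)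
  have hxd := hcont γ.continuousOn_xd
  have hyd := hcont γ.continuousOn_yd
  have hxdd := hderiv fun _ => γ.hasDerivAt_xd
  have hydd := hderiv fun _ => γ.hasDerivAt_yd
  unfold turningRate
  exact AEMeasurable.aestronglyMeasurable (by fun_prop)

lemma intervalIntegrable_turningRate : IntervalIntegrable γ.turningRate volume 0 1 := by
  rw [intervalIntegrable_iff_integrableOn_Ioc_of_le zero_le_one]
  refine (integrable_norm_iff γ.aestronglyMeasurable_turningRate).1 ?_
  refine γ.intK.1.congr (.of_forall fun t => ?_)
  simp only [turningRate, Real.norm_eq_abs, abs_div,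
    abs_of_nonneg (add_nonneg (sq_nonneg (γ.xd t)) (sq_nonneg (γ.yd t)))]

lemma unitTangent_eq_mul_exp_turningAngle (ht : t ∈ Icc (0 : ℝ) 1) :
    γ.unitTangent t = γ.unitTangent 0 * cexp (turningAngle γ.turningRate t * .I) :=
  eq_mul_exp_integral_of_hasDerivAt zero_le_one γ.continuousOn_unitTangent
    γ.intervalIntegrable_turningRate (fun _ => γ.hasDerivAt_unitTangent) t ht

lemma velocity_eq_speed_smul_unitTangent (ht : t ∈ Icc (0 : ℝ) 1) :
    γ.velocity t = γ.speed t • γ.unitTangent t := by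
  rw [unitTangent, Complex.real_smul, mul_div_cancel₀ _ (γ.ofReal_speed_ne_zero t ht)]

lemma unitTangent_ne_zero (ht : t ∈ Icc (0 : ℝ) 1) : γ.unitTangent t ≠ 0 := by
  refine div_ne_zero (fun hz => γ.regular t ht ?_) (γ.ofReal_speed_ne_zero t ht)
  have hre : γ.xd t = 0 := by simpa [velocity] using congrArg Complex.re hz
  have him : γ.yd t = 0 := by simpa [velocity] using congrArg Complex.im hz
  simp [hre, him]

variable {γ}

lemma IsDrop.integral_velocity_eq_zero (hγ : γ.IsDrop) : ∫ t in (0 : ℝ)..1, γ.velocity t = 0 := by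
  have hftc := intervalIntegral.integral_eq_sub_of_hasDerivAt_of_le
    (f := fun t => (γ.x t + γ.y t * .I : ℂ)) zero_le_one ?_ ?_
    (γ.continuousOn_velocity.intervalIntegrable_of_Icc zero_le_one)
  · rw [hftc, hγ.1, hγ.2, sub_self]
  · have hx : ContinuousOn γ.x (Icc 0 1) := fun t ht => (γ.hx t ht).continuousWithinAt
    have hy : ContinuousOn γ.y (Icc 0 1) := fun t ht => (γ.hy t ht).continuousWithinAt
    fun_prop
  · intro t ht
    have hnhds := Icc_mem_nhds ht.1 ht.2
    have ht' := Ioo_subset_Icc_self ht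
    exact ((γ.hx t ht').hasDerivAt hnhds).ofReal_comp.add
      (((γ.hy t ht').hasDerivAt hnhds).ofReal_comp.mul_const _)

lemma IsDrop.displacement_eq_zero (hγ : γ.IsDrop) :
    displacement (arclengthCurvature γ.speed γ.turningRate) = 0 := by
  have hrotate : γ.unitTangent 0 *
      ∫ t in (0 : ℝ)..1, γ.speed t • cexp (turningAngle γ.turningRate t * .I) = 0 := by
    rw [← hγ.integral_velocity_eq_zero, ← intervalIntegral.integral_const_mul]
    refine intervalIntegral.integral_congr fun t ht => ?_
    have ht' : t ∈ Icc (0 : ℝ) 1 := uIcc_of_le (zero_le_one' ℝ) ▸ ht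
    simp only [γ.velocity_eq_speed_smul_unitTangent ht',
      γ.unitTangent_eq_mul_exp_turningAngle ht', mul_smul_comm]
  rw [← displacement_arclengthCurvature γ.continuousOn_speed γ.speed_pos] at hrotate
  have hL := (integral_speed_pos γ.continuousOn_speed γ.speed_pos).ne'
  exact (smul_eq_zero.1 ((mul_eq_zero.1 hrotate).resolve_left
    (γ.unitTangent_ne_zero (left_mem_Icc.2 zero_le_one)))).resolve_left hL

lemma IsDrop.exists_curvature (hγ : γ.IsDrop) :
    ∃ h : CurvatureSpace, displacement h = 0 ∧ ‖h‖ ^ 2 = γ.elasticEnergy * γ.length := by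
  have hmem := memLp_arclengthCurvature γ.continuousOn_speed γ.speed_pos
    γ.intervalIntegrable_turningRate γ.intervalIntegrable_turningRate_sq_div_speed
  refine ⟨hmem.toLp, ?_, ?_⟩
  · rw [displacement_congr hmem.coeFn_toLp, hγ.displacement_eq_zero]
  · rw [norm_sq_eq_integral hmem.coeFn_toLp, integral_arclengthCurvature_sq γ.continuousOn_speed
      γ.speed_pos, mul_comm, ← elasticEnergy_eq_integral_turningRate]
    rfl

end Frenet

section OfCurvature

lemma sq_cos_add_sq_sin (l θ : ℝ) : (l * Real.cos θ) ^ 2 + (l * Real.sin θ) ^ 2 = l ^ 2 := by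
  rw [mul_pow, mul_pow, ← mul_add, Real.cos_sq_add_sin_sq, mul_one]

lemma cross_cos_sin (l θ κ : ℝ) :
    l * Real.cos θ * (l * (Real.cos θ * κ)) - l * (-Real.sin θ * κ) * (l * Real.sin θ) =
      l ^ 2 * κ := by
  linear_combination l ^ 2 * κ * Real.cos_sq_add_sin_sq θ

lemma elastic_density_of_speed {l : ℝ} (hl : 0 < l) (κ : ℝ) :
    (l ^ 2 * κ) ^ 2 / ((l ^ 2) ^ 2 * √(l ^ 2)) = κ ^ 2 / l := by
  rw [Real.sqrt_sq hl.le]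
  field_simp

variable {k : ℝ → ℝ} (hk : Continuous k) {l : ℝ} (hl : 0 < l)

/-- The curve of constant speed `l` starting at the origin with tangent `(1, 0)` whose tangent
turns at rate `k`, so that its scalar curvature is `k / l`. -/
def ofCurvature : RegularCurve :=
  have hθ := hasDerivAt_turningAngle hk
  have hθ_cont : Continuous (turningAngle k) := continuous_iff_continuousAt.2 fun t =>
    (hθ t).continuousAt
  have hcos : Continuous fun t => Real.cos (turningAngle k t) := by fun_prop
  have hsin : Continuous fun t => Real.sin (turningAngle k t) := by fun_prop
  { x t := l * ∫ s in (0 : ℝ)..t, Real.cos (turningAngle k s)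
    y t := l * ∫ s in (0 : ℝ)..t, Real.sin (turningAngle k s)
    xd t := l * Real.cos (turningAngle k t)
    yd t := l * Real.sin (turningAngle k t)
    xdd t := l * (-Real.sin (turningAngle k t) * k t)
    ydd t := l * (Real.cos (turningAngle k t) * k t)
    hx t _ := ((hcos.integral_hasStrictDerivAt 0 t).hasDerivAt.const_mul l).hasDerivWithinAt
    hy t _ := ((hsin.integral_hasStrictDerivAt 0 t).hasDerivAt.const_mul l).hasDerivWithinAt
    hxd t _ := ((hθ t).cos.const_mul l).hasDerivWithinAt
    hyd t _ := ((hθ t).sin.const_mul l).hasDerivWithinAt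
    regular t _ := by
      rw [sq_cos_add_sq_sin]
      positivity
    intE := by
      simp only [sq_cos_add_sq_sin, cross_cos_sin, elastic_density_of_speed hl]
      exact ((hk.pow 2).div_const l).intervalIntegrable 0 1
    intK := by
      simp only [sq_cos_add_sq_sin, cross_cos_sin]
      exact ((hk.const_mul (l ^ 2)).abs.div_const (l ^ 2)).intervalIntegrable 0 1 }

lemma length_ofCurvature : (ofCurvature hk hl).length = l := by
  simp only [length, ofCurvature, sq_cos_add_sq_sin, Real.sqrt_sq hl.le,
    intervalIntegral.integral_const, sub_zero, one_smul]

lemma elasticEnergy_ofCurvature :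
    (ofCurvature hk hl).elasticEnergy = (∫ t in (0 : ℝ)..1, k t ^ 2) / l := by
  simp only [elasticEnergy, ofCurvature, sq_cos_add_sq_sin, cross_cos_sin,
    elastic_density_of_speed hl, intervalIntegral.integral_div]

lemma isDrop_ofCurvature (hclosed : displacement k = 0) : (ofCurvature hk hl).IsDrop := by
  have hint : IntervalIntegrable k volume 0 1 := hk.intervalIntegrable 0 1
  simp only [IsDrop, ofCurvature, ← re_displacement hint, ← im_displacement hint, hclosed,
    intervalIntegral.integral_same, Complex.zero_re, Complex.zero_im, and_self]

end OfCurvature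

end RegularCurve

end

/-- The infimum of the penalized elastic energy
`F = ∫ (k² + 1) ds = E + L` over all drops (regular `H^2` curves with
`γ(0) = γ(1)`, with no condition on the tangents there) is attained. -/
theorem exists_minimizing_drop :
    ∃ γ₀ : RegularCurve, (γ₀.x 0 = γ₀.x 1 ∧ γ₀.y 0 = γ₀.y 1) ∧
      ∀ γ : RegularCurve, (γ.x 0 = γ.x 1 ∧ γ.y 0 = γ.y 1) →
        γ₀.elasticEnergy + γ₀.length ≤ γ.elasticEnergy + γ.length := by
  obtain ⟨g, hg, hmin⟩ := exists_minimal_displacement_eq_zero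
  obtain ⟨k, hk, hkg⟩ := exists_continuous_ae_eq_of_minimal hg hmin
  have hl : 0 < ‖g‖ := norm_pos_iff.2 (ne_zero_of_displacement_eq_zero hg)
  have hk_sq : ∫ t in (0 : ℝ)..1, k t ^ 2 = ‖g‖ ^ 2 := (norm_sq_eq_integral hkg.symm).symm
  let γ₀ := RegularCurve.ofCurvature hk hl
  have hE : γ₀.elasticEnergy = ‖g‖ := by
    rw [RegularCurve.elasticEnergy_ofCurvature, hk_sq, sq, mul_div_cancel_right₀ _ hl.ne']
  have hL : γ₀.length = ‖g‖ := RegularCurve.length_ofCurvature hk hl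
  refine ⟨γ₀, RegularCurve.isDrop_ofCurvature hk hl ((displacement_congr hkg).trans hg),
    fun γ hγ => ?_⟩
  obtain ⟨h, hh, hEL⟩ := RegularCurve.IsDrop.exists_curvature hγ
  calc γ₀.elasticEnergy + γ₀.length = 2 * ‖g‖ := by rw [hE, hL, two_mul]
    _ ≤ 2 * ‖h‖ := by gcongr; exact hmin h hh
    _ ≤ γ.elasticEnergy + γ.length := by
      refine le_of_sq_le_sq ?_ (add_nonneg γ.elasticEnergy_nonneg γ.length_nonneg)
      rw [mul_pow, hEL]
      linarith [four_mul_le_sq_add γ.elasticEnergy γ.length]
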